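/- arXiv:2403.09889 — 2 statements merged into one kernel-verified Lean document; each statement's English description precedes it below -/
import Mathlib

section
/- Let V := sup_{s∈[0,1]} ∫‖θ‖₂² dν_s(θ) < ∞ and T := ∫‖ω‖₂² dτ(ω) < ∞. Let z : [0,1] → ℝ^d be a C¹ solution of the mean-field forward ODE, and let p : [0,1] → ℝ^d be a C¹ solution of the associated adjoint ODE. Then for all s ∈ [0,1], ‖p(s)‖₂ ≤ C1·(T+1)·exp(α·C1·(V+1)). -/
open MeasureTheory Real Set
open scoped RealInnerProductSpace

noncomputable section

/-- `σ(z, θ) = σ0(⟪w, z⟫ + b) • u` for `θ = (u, w, b) ∈ ℝ^d × ℝ^d × ℝ ≅ ℝ^{2d+1}`. -/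
def sigmaV (d : ℕ) (σ0 : ℝ → ℝ) (z : EuclideanSpace ℝ (Fin d))
    (θ : EuclideanSpace ℝ (Fin d) × EuclideanSpace ℝ (Fin d) × ℝ) : EuclideanSpace ℝ (Fin d) :=
  σ0 (⟪θ.2.1, z⟫ + θ.2.2) • θ.1

/-- `‖θ‖₂² = ‖u‖₂² + ‖w‖₂² + b²` for `θ = (u, w, b)`. -/
def thetaNormSq (d : ℕ) (θ : EuclideanSpace ℝ (Fin d) × EuclideanSpace ℝ (Fin d) × ℝ) : ℝ :=
  ‖θ.1‖ ^ 2 + ‖θ.2.1‖ ^ 2 + θ.2.2 ^ 2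

/-- `‖ω‖₂² = a² + ‖w‖₂² + b²` for `ω = (a, w, b) ∈ ℝ × ℝ^d × ℝ ≅ ℝ^{d+2}`. -/
def omegaNormSq (d : ℕ) (ω : ℝ × EuclideanSpace ℝ (Fin d) × ℝ) : ℝ :=
  ω.1 ^ 2 + ‖ω.2.1‖ ^ 2 + ω.2.2 ^ 2

/-- The `d × d` matrix `∫ ∇_zσ(z,θ) dμ(θ)`, where `∇_zσ(z,θ) = σ0'(⟪w,z⟫+b) u wᵀ`,
computed entrywise. -/
def intJacZ (d : ℕ) (σ0 : ℝ → ℝ) (z : EuclideanSpace ℝ (Fin d))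
    (μ : Measure (EuclideanSpace ℝ (Fin d) × EuclideanSpace ℝ (Fin d) × ℝ)) :
    Matrix (Fin d) (Fin d) ℝ :=
  Matrix.of fun i j => ∫ θ, deriv σ0 (⟪θ.2.1, z⟫ + θ.2.2) * θ.1 i * θ.2.1 j ∂μ

/-- `∇_zh(z,ω) = a σ0'(⟪w,z⟫+b) w` for `ω = (a, w, b)`. -/
def gradZh (d : ℕ) (σ0 : ℝ → ℝ) (z : EuclideanSpace ℝ (Fin d))
    (ω : ℝ × EuclideanSpace ℝ (Fin d) × ℝ) : EuclideanSpace ℝ (Fin d) :=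
  (ω.1 * deriv σ0 (⟪ω.2.1, z⟫ + ω.2.2)) • ω.2.1

/-!
Since `‖(∇_zσ)ᵀ p‖ ≤ C ‖u‖ ‖w‖ ‖p‖ ≤ (C / 2) ‖θ‖² ‖p‖`, where `C` bounds `|σ0'|`, integrating against
`ν_s` gives `‖p'(s)‖ ≤ α C (V / 2) ‖p(s)‖`. The same estimate for `∇_zh` gives `‖p(1)‖ ≤ C T / 2`,
and Grönwall's inequality run backwards from `s = 1` concludes.
-/

theorem norm_le_gronwallBound_of_norm_deriv_left_le {E : Type*} [NormedAddCommGroup E]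
    [NormedSpace ℝ E] {f f' : ℝ → E} {δ K ε a b : ℝ} (hf : ContinuousOn f (Icc a b))
    (hf' : ∀ x ∈ Ioc a b, HasDerivWithinAt f (f' x) (Iic x) x) (hb : ‖f b‖ ≤ δ)
    (bound : ∀ x ∈ Ioc a b, ‖f' x‖ ≤ K * ‖f x‖ + ε) :
    ∀ x ∈ Icc a b, ‖f x‖ ≤ gronwallBound δ K ε (b - x) := by
  have hIco : ∀ t ∈ Ico (-b) (-a), -t ∈ Ioc a b := fun t ht =>
    ⟨lt_neg.2 ht.2, neg_le.1 ht.1⟩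
  have hIcc : MapsTo (fun t : ℝ => -t) (Icc (-b) (-a)) (Icc a b) := fun t ht =>
    ⟨le_neg.2 ht.2, neg_le.1 ht.1⟩
  have hreflect : ∀ t ∈ Icc (-b) (-a), ‖f (-t)‖ ≤ gronwallBound δ K ε (t - -b) := by
    refine norm_le_gronwallBound_of_norm_deriv_right_le (f' := fun t => (-1 : ℝ) • f' (-t))
      (hf.comp continuous_neg.continuousOn hIcc) (fun t ht => ?_) (by rwa [neg_neg])
      (fun t ht => by simpa using bound (-t) (hIco t ht))
    exact (hf' (-t) (hIco t ht)).scomp t (hasDerivAt_neg t).hasDerivWithinAt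
      fun y (hy : t ≤ y) => neg_le_neg hy
  intro x hx
  simpa [neg_add_eq_sub] using hreflect (-x) ⟨neg_le_neg hx.2, neg_le_neg hx.1⟩

section

variable {d : ℕ}

lemma thetaNormSq_nonneg (θ : EuclideanSpace ℝ (Fin d) × EuclideanSpace ℝ (Fin d) × ℝ) :
    0 ≤ thetaNormSq d θ := by
  unfold thetaNormSq
  positivity

lemma omegaNormSq_nonneg (ω : ℝ × EuclideanSpace ℝ (Fin d) × ℝ) : 0 ≤ omegaNormSq d ω := by
  unfold omegaNormSq
  positivity

lemma norm_mul_norm_le_thetaNormSq_div_two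
    (θ : EuclideanSpace ℝ (Fin d) × EuclideanSpace ℝ (Fin d) × ℝ) :
    ‖θ.1‖ * ‖θ.2.1‖ ≤ thetaNormSq d θ / 2 := by
  unfold thetaNormSq
  linarith [two_mul_le_add_sq ‖θ.1‖ ‖θ.2.1‖, sq_nonneg θ.2.2]

lemma abs_mul_norm_le_omegaNormSq_div_two (ω : ℝ × EuclideanSpace ℝ (Fin d) × ℝ) :
    |ω.1| * ‖ω.2.1‖ ≤ omegaNormSq d ω / 2 := by
  unfold omegaNormSq
  linarith [two_mul_le_add_sq |ω.1| ‖ω.2.1‖, sq_abs ω.1, sq_nonneg ω.2.2]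

/-- The vector `(∇_zσ(z,θ))ᵀ p = σ0'(⟪w,z⟫+b) ⟪u,p⟫ w` for `θ = (u, w, b)`, whose integral is the
right-hand side of the adjoint equation up to the factor `-α`. -/
def jacZTransposeApply (d : ℕ) (σ0 : ℝ → ℝ) (z p : EuclideanSpace ℝ (Fin d))
    (θ : EuclideanSpace ℝ (Fin d) × EuclideanSpace ℝ (Fin d) × ℝ) : EuclideanSpace ℝ (Fin d) :=
  (deriv σ0 (⟪θ.2.1, z⟫ + θ.2.2) * ⟪θ.1, p⟫) • θ.2.1

lemma jacZTransposeApply_apply (σ0 : ℝ → ℝ) (z p : EuclideanSpace ℝ (Fin d))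
    (θ : EuclideanSpace ℝ (Fin d) × EuclideanSpace ℝ (Fin d) × ℝ) (j : Fin d) :
    jacZTransposeApply d σ0 z p θ j =
      ∑ i, deriv σ0 (⟪θ.2.1, z⟫ + θ.2.2) * θ.1 i * θ.2.1 j * p i := by
  simp only [jacZTransposeApply, PiLp.smul_apply, smul_eq_mul, PiLp.inner_apply (x := θ.1),
    RCLike.inner_apply, conj_trivial, Finset.mul_sum, Finset.sum_mul]
  exact Finset.sum_congr rfl fun i _ => by ring

variable {σ0 : ℝ → ℝ} {C : ℝ}

lemma norm_jacZTransposeApply_le (hC : ∀ x, |deriv σ0 x| ≤ C) (z p : EuclideanSpace ℝ (Fin d))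
    (θ : EuclideanSpace ℝ (Fin d) × EuclideanSpace ℝ (Fin d) × ℝ) :
    ‖jacZTransposeApply d σ0 z p θ‖ ≤ C * (thetaNormSq d θ / 2) * ‖p‖ := by
  have hC0 : 0 ≤ C := (abs_nonneg _).trans (hC 0)
  calc ‖jacZTransposeApply d σ0 z p θ‖
      = |deriv σ0 (⟪θ.2.1, z⟫ + θ.2.2)| * |⟪θ.1, p⟫| * ‖θ.2.1‖ := by
        rw [jacZTransposeApply, norm_smul, norm_mul, Real.norm_eq_abs, Real.norm_eq_abs]
    _ ≤ C * (‖θ.1‖ * ‖p‖) * ‖θ.2.1‖ := by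
        gcongr
        exacts [hC _, abs_real_inner_le_norm _ _]
    _ = C * (‖θ.1‖ * ‖θ.2.1‖) * ‖p‖ := by ring
    _ ≤ C * (thetaNormSq d θ / 2) * ‖p‖ := by
        gcongr
        exact norm_mul_norm_le_thetaNormSq_div_two θ

lemma norm_gradZh_le (hC : ∀ x, |deriv σ0 x| ≤ C) (z : EuclideanSpace ℝ (Fin d))
    (ω : ℝ × EuclideanSpace ℝ (Fin d) × ℝ) :
    ‖gradZh d σ0 z ω‖ ≤ C * (omegaNormSq d ω / 2) := by
  have hC0 : 0 ≤ C := (abs_nonneg _).trans (hC 0)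
  calc ‖gradZh d σ0 z ω‖ = |deriv σ0 (⟪ω.2.1, z⟫ + ω.2.2)| * (|ω.1| * ‖ω.2.1‖) := by
        rw [gradZh, norm_smul, norm_mul, Real.norm_eq_abs, Real.norm_eq_abs]
        ring
    _ ≤ C * (omegaNormSq d ω / 2) := by
        gcongr
        exacts [hC _, abs_mul_norm_le_omegaNormSq_div_two ω]

lemma norm_integral_gradZh_le (hC : ∀ x, |deriv σ0 x| ≤ C)
    {τ : Measure (ℝ × EuclideanSpace ℝ (Fin d) × ℝ)}
    (hτ : Integrable (fun ω => omegaNormSq d ω) τ) (z : EuclideanSpace ℝ (Fin d)) :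
    ‖∫ ω, gradZh d σ0 z ω ∂τ‖ ≤ C * ((∫ ω, omegaNormSq d ω ∂τ) / 2) := by
  rw [← integral_div, ← integral_const_mul]
  exact norm_integral_le_of_norm_le ((hτ.div_const 2).const_mul C)
    (.of_forall (norm_gradZh_le hC z))

variable {μ : Measure (EuclideanSpace ℝ (Fin d) × EuclideanSpace ℝ (Fin d) × ℝ)}

lemma integrable_jacZTransposeApply (hC : ∀ x, |deriv σ0 x| ≤ C)
    (hμ : Integrable (fun θ => thetaNormSq d θ) μ) (z p : EuclideanSpace ℝ (Fin d)) :
    Integrable (jacZTransposeApply d σ0 z p) μ := by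
  have hmeas : Measurable (jacZTransposeApply d σ0 z p) := by
    unfold jacZTransposeApply
    fun_prop
  exact (((hμ.div_const 2).const_mul C).mul_const ‖p‖).mono' hmeas.aestronglyMeasurable
    (.of_forall (norm_jacZTransposeApply_le hC z p))

lemma integrable_jacZ_entry (hC : ∀ x, |deriv σ0 x| ≤ C)
    (hμ : Integrable (fun θ => thetaNormSq d θ) μ) (z : EuclideanSpace ℝ (Fin d)) (i j : Fin d) :
    Integrable (fun θ => deriv σ0 (⟪θ.2.1, z⟫ + θ.2.2) * θ.1 i * θ.2.1 j) μ := by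
  simpa [jacZTransposeApply, EuclideanSpace.inner_single_right] using
    (integrable_jacZTransposeApply hC hμ z (EuclideanSpace.single i 1)).eval_piLp j

lemma toLp_intJacZ_transpose_mulVec (hC : ∀ x, |deriv σ0 x| ≤ C)
    (hμ : Integrable (fun θ => thetaNormSq d θ) μ) (z p : EuclideanSpace ℝ (Fin d)) :
    WithLp.toLp 2 ((intJacZ d σ0 z μ).transpose.mulVec p) =
      ∫ θ, jacZTransposeApply d σ0 z p θ ∂μ := by
  ext j
  rw [eval_integral_piLp (integrable_jacZTransposeApply hC hμ z p).eval_piLp]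
  simp_rw [jacZTransposeApply_apply]
  rw [integral_finsetSum _ fun i _ => (integrable_jacZ_entry hC hμ z i j).mul_const (p i)]
  simp_rw [integral_mul_const]
  rfl

lemma norm_intJacZ_transpose_mulVec_le (hC : ∀ x, |deriv σ0 x| ≤ C)
    (hμ : Integrable (fun θ => thetaNormSq d θ) μ) (z p : EuclideanSpace ℝ (Fin d)) :
    ‖WithLp.toLp 2 ((intJacZ d σ0 z μ).transpose.mulVec p)‖ ≤
      C * ((∫ θ, thetaNormSq d θ ∂μ) / 2) * ‖p‖ := by
  rw [toLp_intJacZ_transpose_mulVec hC hμ, ← integral_div, ← integral_const_mul,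
    ← integral_mul_const]
  exact norm_integral_le_of_norm_le (((hμ.div_const 2).const_mul C).mul_const ‖p‖)
    (.of_forall (norm_jacZTransposeApply_le hC z p))

end

theorem statement7_general {d : ℕ} {C : ℝ} {σ0 : ℝ → ℝ} (_hσ : Differentiable ℝ σ0)
    (hC : ∀ x, |deriv σ0 x| ≤ C) {α : ℝ} (hα : 0 ≤ α)
    {ν : ℝ → Measure (EuclideanSpace ℝ (Fin d) × EuclideanSpace ℝ (Fin d) × ℝ)}
    {τ : Measure (ℝ × EuclideanSpace ℝ (Fin d) × ℝ)} {V T : ℝ}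
    (hν : ∀ s ∈ Icc (0 : ℝ) 1,
      Integrable (fun θ => thetaNormSq d θ) (ν s) ∧ ∫ θ, thetaNormSq d θ ∂(ν s) ≤ V)
    (hτ : Integrable (fun ω => omegaNormSq d ω) τ ∧ ∫ ω, omegaNormSq d ω ∂τ ≤ T)
    {z p : ℝ → EuclideanSpace ℝ (Fin d)}
    (hp : ∀ s ∈ Icc (0 : ℝ) 1,
      HasDerivWithinAt p
        ((-α) • WithLp.toLp 2 ((intJacZ d σ0 (z s) (ν s)).transpose.mulVec (p s))) (Icc 0 1) s)
    (hp1 : p 1 = ∫ ω, gradZh d σ0 (z 1) ω ∂τ) :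
    ∀ s ∈ Icc (0 : ℝ) 1, ‖p s‖ ≤ C * (T / 2) * exp (α * C * (V / 2) * (1 - s)) := by
  have hC0 : 0 ≤ C := (abs_nonneg _).trans (hC 0)
  have hterminal : ‖p 1‖ ≤ C * (T / 2) := by
    rw [hp1]
    refine (norm_integral_gradZh_le hC hτ.1 (z 1)).trans ?_
    gcongr
    exact hτ.2
  have hbound : ∀ s ∈ Icc (0 : ℝ) 1,
      ‖(-α) • WithLp.toLp 2 ((intJacZ d σ0 (z s) (ν s)).transpose.mulVec (p s))‖ ≤
        α * C * (V / 2) * ‖p s‖ := by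
    intro s hs
    rw [norm_smul, norm_neg, Real.norm_of_nonneg hα, mul_assoc α, mul_assoc α]
    gcongr
    refine (norm_intJacZ_transpose_mulVec_le hC (hν s hs).1 (z s) (p s)).trans ?_
    gcongr
    exact (hν s hs).2
  intro s hs
  rw [← gronwallBound_ε0]
  exact norm_le_gronwallBound_of_norm_deriv_left_le (fun t ht => (hp t ht).continuousWithinAt)
    (fun t ht => (hp t (Ioc_subset_Icc_self ht)).mono_of_mem_nhdsWithin (Icc_mem_nhdsLE_of_mem ht))
    hterminal (fun t ht => (hbound t (Ioc_subset_Icc_self ht)).trans_eq (add_zero _).symm) s hs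

/-- a priori bound on any C¹ solution of the adjoint ODE
`p'(s) = −α (∫ ∇_zσ(z(s),θ) dν_s)ᵀ p(s)`, `p(1) = ∫ ∇_zh(z(1),ω) dτ(ω)`:
`‖p(s)‖₂ ≤ C1 (T+1) exp(α C1 (V+1))` on `[0,1]`. -/
theorem statement7 (d : ℕ) (hd : 1 ≤ d) (C1 : ℝ) (hC1 : 0 < C1)
    (σ0 : ℝ → ℝ) (hσ : ContDiff ℝ 2 σ0)
    (hb0 : ∀ x : ℝ, |σ0 x| ≤ C1 * max |x| 1)
    (hb1 : ∀ x : ℝ, |deriv σ0 x| ≤ C1)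
    (hb2 : ∀ x : ℝ, |deriv (deriv σ0) x| ≤ C1)
    (α : ℝ) (hα : 0 < α)
    (ν : ℝ → Measure (EuclideanSpace ℝ (Fin d) × EuclideanSpace ℝ (Fin d) × ℝ))
    (hprob : ∀ s, IsProbabilityMeasure (ν s))
    (τ : Measure (ℝ × EuclideanSpace ℝ (Fin d) × ℝ)) (hτ : IsProbabilityMeasure τ)
    (V T : ℝ)
    (hmom : ∀ s ∈ Set.Icc (0 : ℝ) 1,
      Integrable (fun θ => thetaNormSq d θ) (ν s) ∧ ∫ θ, thetaNormSq d θ ∂(ν s) ≤ V)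
    (hmomτ : Integrable (fun ω => omegaNormSq d ω) τ ∧ ∫ ω, omegaNormSq d ω ∂τ ≤ T)
    (x : EuclideanSpace ℝ (Fin d)) (z : ℝ → EuclideanSpace ℝ (Fin d))
    (hzint : ∀ s ∈ Set.Icc (0 : ℝ) 1, Integrable (sigmaV d σ0 (z s)) (ν s))
    (hz0 : z 0 = x)
    (hz : ∀ s ∈ Set.Icc (0 : ℝ) 1,
      HasDerivWithinAt z (α • ∫ θ, sigmaV d σ0 (z s) θ ∂(ν s)) (Set.Icc (0 : ℝ) 1) s)
    -- the integrals defining the adjoint ODE are well defined :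
    (hMint : ∀ s ∈ Set.Icc (0 : ℝ) 1, ∀ i j : Fin d,
      Integrable (fun θ => deriv σ0 (⟪θ.2.1, z s⟫ + θ.2.2) * θ.1 i * θ.2.1 j) (ν s))
    (hτint : Integrable (gradZh d σ0 (z 1)) τ)
    (p : ℝ → EuclideanSpace ℝ (Fin d))
    (hp : ∀ s ∈ Set.Icc (0 : ℝ) 1,
      HasDerivWithinAt p
        ((-α) • ((WithLp.toLp 2 ((intJacZ d σ0 (z s) (ν s)).transpose.mulVec (p s)) :
          EuclideanSpace ℝ (Fin d)))) (Set.Icc (0 : ℝ) 1) s)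
    (hp1 : p 1 = ∫ ω, gradZh d σ0 (z 1) ω ∂τ) :
    ∀ s ∈ Set.Icc (0 : ℝ) 1, ‖p s‖ ≤ C1 * (T + 1) * Real.exp (α * C1 * (V + 1)) := by
  have hV : 0 ≤ V := (integral_nonneg thetaNormSq_nonneg).trans (hmom 0 (by simp)).2
  have hT : 0 ≤ T := (integral_nonneg omegaNormSq_nonneg).trans hmomτ.2
  intro s hs
  calc ‖p s‖ ≤ C1 * (T / 2) * exp (α * C1 * (V / 2) * (1 - s)) :=
        statement7_general (hσ.differentiable two_ne_zero) hb1 hα.le hmom hmomτ hp hp1 s hs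
    _ ≤ C1 * (T + 1) * exp (α * C1 * (V + 1)) := by
        rw [mul_assoc (α * C1)]
        gcongr <;> nlinarith [hs.1]

end
end

section
/- Let n ≥ 2, m ≥ 1, and let v₁,…,vₙ ∈ ℝ^m satisfy ‖vᵢ‖₂ = 1 for all i and |⟨vᵢ,vⱼ⟩| ≤ c for all i ≠ j, where 0 ≤ c < 1. Let f : ℝ → ℝ be measurable with ∫ f² dγ₁ < ∞, and let K be the n×n matrix with K_{ij} = ∫ f(⟨w,vᵢ⟩)·f(⟨w,vⱼ⟩) dγ_m(w). Then for every integer r ≥ 2·log(2n)/(1−c), the smallest eigenvalue of K satisfies λ_min(K) ≥ μ_r(f)²·(1−(n−1)·c^r) ≥ μ_r(f)²/2. -/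
open MeasureTheory ProbabilityTheory Real Set
open scoped RealInnerProductSpace

noncomputable section

/-- The standard Gaussian measure on `ℝ^m = EuclideanSpace ℝ (Fin m)`. -/
def gaussE (m : ℕ) : Measure (EuclideanSpace ℝ (Fin m)) :=
  (Measure.pi fun _ : Fin m => gaussianReal 0 1).map (MeasurableEquiv.toLp 2 (Fin m → ℝ))

/-- The `k`-th Hermite coefficient `μ_k(f) = ∫ f · He_k dγ₁`, where `He_k` is the `k`-th
Hermite polynomial normalized to be orthonormal in `L²(γ₁)`, i.e. the probabilists' Hermite
polynomial divided by `√(k!)`. -/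
def hermiteCoeff (f : ℝ → ℝ) (k : ℕ) : ℝ :=
  ∫ x, f x * (Polynomial.aeval x (Polynomial.hermite k) / Real.sqrt (Nat.factorial k))
    ∂(gaussianReal 0 1)

open scoped NNReal ENNReal

/-!
By Stein's identity `He_k` is an eigenfunction of the Ornstein–Uhlenbeck semigroup: averaging it
over `N(ρ x, 1 - ρ²)` returns `ρ^k He_k(x)`. Writing a standard Gaussian pair as `(X, ρ X + Z)`
with `Z` independent of `X`, this is Mehler's formula `𝔼[f(X) He_k(Y)] = ρ^k μ_k(f)`. Hence
subtracting from each `f(⟪w, vᵢ⟫)` its `r`-th Hermite component `μ_r(f) He_r(⟪w, vᵢ⟫)` changes the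
second-moment matrix `K` into `K - μ_r(f)² (⟪vᵢ, vⱼ⟫^r)`, which is therefore a Gram matrix. So
`K ⪰ μ_r(f)² (⟪vᵢ, vⱼ⟫^r)`, and Gershgorin's theorem bounds the spectrum of `(⟪vᵢ, vⱼ⟫^r)` below
by `1 - (n - 1) c^r`. Finally `c ≤ exp (-(1 - c))` makes `n c^r ≤ 1 / 2` as soon as
`r (1 - c) ≥ log (2 n)`.
-/

section GaussianIntegration

variable {μ : ℝ} {v : ℝ≥0} {g g' : ℝ → ℝ}

lemma integrable_gaussianReal_iff {E : Type*} [NormedAddCommGroup E] [NormedSpace ℝ E] {g : ℝ → E}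
    (hv : v ≠ 0) :
    Integrable g (gaussianReal μ v) ↔ Integrable fun x ↦ gaussianPDFReal μ v x • g x := by
  rw [gaussianReal_of_var_ne_zero _ hv, integrable_withDensity_iff_integrable_smul'
    (measurable_gaussianPDF μ v) (ae_of_all _ fun _ ↦ gaussianPDF_lt_top)]
  simp only [toReal_gaussianPDF]

lemma hasDerivAt_gaussianPDFReal (μ : ℝ) (v : ℝ≥0) (x : ℝ) :
    HasDerivAt (gaussianPDFReal μ v) (gaussianPDFReal μ v x * (-(x - μ) / v)) x := by
  have h_exponent : HasDerivAt (fun y ↦ -(y - μ) ^ 2 / (2 * v)) (-(x - μ) / v) x := by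
    convert! (((hasDerivAt_id x).sub_const μ).pow 2).neg.div_const (2 * v : ℝ) using 1
    norm_num [mul_div_mul_left, neg_mul_eq_mul_neg]
  exact (h_exponent.exp.const_mul _).congr_deriv (mul_assoc _ _ _).symm

lemma integral_sub_mul_gaussianReal (hg : ∀ x, HasDerivAt g (g' x) x)
    (hg_int : Integrable g (gaussianReal μ v))
    (hg_mul_int : Integrable (fun x ↦ (x - μ) * g x) (gaussianReal μ v))
    (hg'_int : Integrable g' (gaussianReal μ v)) :
    ∫ x, (x - μ) * g x ∂gaussianReal μ v = v * ∫ x, g' x ∂gaussianReal μ v := by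
  obtain rfl | hv := eq_or_ne v 0
  · simp
  have hv' : (v : ℝ) ≠ 0 := by exact_mod_cast hv
  have h_total : ∫ x, (v * g' x - (x - μ) * g x) ∂gaussianReal μ v = 0 := by
    have h_deriv (x : ℝ) : HasDerivAt (fun y ↦ v * (gaussianPDFReal μ v y * g y))
        (gaussianPDFReal μ v x * (v * g' x - (x - μ) * g x)) x := by
      convert! ((hasDerivAt_gaussianPDFReal μ v x).mul (hg x)).const_mul (v : ℝ) using 1
      field_simp
      ring
    rw [integral_gaussianReal_eq_integral_smul hv]
    exact integral_eq_zero_of_hasDerivAt_of_integrable h_deriv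
      ((integrable_gaussianReal_iff hv).1 ((hg'_int.const_mul _).sub hg_mul_int))
      (((integrable_gaussianReal_iff hv).1 hg_int).const_mul _)
  rw [integral_sub (hg'_int.const_mul _) hg_mul_int, integral_const_mul] at h_total
  linarith

end GaussianIntegration

section PolynomialMoments

open Polynomial

variable {R : Type*} [CommSemiring R] [Algebra R ℝ] (μ : ℝ) (v : ℝ≥0)

lemma integrable_aeval_gaussianReal (p : R[X]) :
    Integrable (fun x ↦ aeval x p) (gaussianReal μ v) := by
  have h_pow (k : ℕ) : Integrable (fun x : ℝ ↦ x ^ k) (gaussianReal μ v) :=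
    integrable_pow_of_mem_interior_integrableExpSet (X := id) (by simp) k
  simp_rw [aeval_eq_sum_range, Algebra.smul_def]
  exact integrable_finsetSum _ fun i _ ↦ (h_pow i).const_mul _

lemma memLp_two_aeval_gaussianReal (p : R[X]) :
    MemLp (fun x ↦ aeval x p) 2 (gaussianReal μ v) := by
  rw [memLp_two_iff_integrable_sq p.continuous_aeval.aestronglyMeasurable]
  simp_rw [← map_pow]
  exact integrable_aeval_gaussianReal μ v (p ^ 2)

lemma integrable_mul_aeval_gaussianReal (p : R[X]) :
    Integrable (fun x ↦ x * aeval x p) (gaussianReal μ v) :=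
  (integrable_aeval_gaussianReal μ v (X * p)).congr (ae_of_all _ fun x ↦ by simp)

lemma integral_mul_aeval_gaussianReal (p : R[X]) :
    ∫ x, x * aeval x p ∂gaussianReal μ v =
      μ * ∫ x, aeval x p ∂gaussianReal μ v + v * ∫ x, aeval x (derivative p) ∂gaussianReal μ v := by
  have hp := integrable_aeval_gaussianReal μ v p
  have hXp := integrable_mul_aeval_gaussianReal μ v p
  have h_stein := integral_sub_mul_gaussianReal (fun x ↦ p.hasDerivAt_aeval x) hp
    (by simpa only [sub_mul] using! hXp.sub (hp.const_mul μ)) (integrable_aeval_gaussianReal μ v _)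
  simp_rw [sub_mul] at h_stein
  rw [integral_sub hXp (hp.const_mul μ), integral_const_mul] at h_stein
  linarith

end PolynomialMoments

section Hermite

open Polynomial

lemma derivative_hermite_succ (k : ℕ) :
    derivative (hermite (k + 1)) = (k + 1 : ℤ[X]) * hermite k := by
  induction k with
  | zero => simp
  | succ k ih =>
    rw [hermite_succ (k + 1), derivative_sub, derivative_mul, ih, derivative_mul, hermite_succ k]
    simp only [derivative_X, derivative_add, derivative_natCast, derivative_one]
    push_cast
    ring

lemma hermite_add_two (k : ℕ) :
    hermite (k + 2) = X * hermite (k + 1) - (k + 1 : ℤ[X]) * hermite k := by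
  rw [hermite_succ (k + 1), derivative_hermite_succ]

lemma integral_hermite_gaussianReal {ρ : ℝ} {v : ℝ≥0} (h : ρ ^ 2 + v = 1) (x : ℝ) (k : ℕ) :
    ∫ y, aeval y (hermite k) ∂gaussianReal (ρ * x) v = ρ ^ k * aeval x (hermite k) := by
  induction k using Nat.twoStepInduction with
  | zero => simp
  | one => simp
  | more k ih_k ih_succ =>
    have h_stein := integral_mul_aeval_gaussianReal (ρ * x) v (hermite (k + 1))
    simp only [derivative_hermite_succ, map_mul, map_add, map_natCast, map_one,
      integral_const_mul, ih_k, ih_succ] at h_stein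
    have h_rec (y : ℝ) : aeval y (hermite (k + 2)) =
        y * aeval y (hermite (k + 1)) - (k + 1) * aeval y (hermite k) := by
      rw [hermite_add_two]
      simp only [map_sub, map_mul, map_add, map_natCast, map_one, aeval_X]
    simp_rw [h_rec]
    rw [integral_sub (integrable_mul_aeval_gaussianReal _ _ _)
      ((integrable_aeval_gaussianReal _ _ _).const_mul _), integral_const_mul, h_stein, ih_k]
    linear_combination ((k + 1) * ρ ^ k * aeval x (hermite k)) * h

lemma integral_aeval_mul_hermite_succ (p : ℤ[X]) (k : ℕ) :
    ∫ x, aeval x (p * hermite (k + 1)) ∂gaussianReal 0 1 =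
      ∫ x, aeval x (derivative p * hermite k) ∂gaussianReal 0 1 := by
  have h_int (q : ℤ[X]) := integrable_aeval_gaussianReal 0 1 q
  have h_stein := integral_mul_aeval_gaussianReal 0 1 (p * hermite k)
  have h_split (x : ℝ) : aeval x (p * hermite (k + 1)) =
      x * aeval x (p * hermite k) - aeval x (p * derivative (hermite k)) := by
    simp only [hermite_succ, map_mul, map_sub, aeval_X]
    ring
  simp_rw [h_split]
  rw [integral_sub (integrable_mul_aeval_gaussianReal 0 1 _) (h_int _), h_stein, derivative_mul]
  simp only [map_add, zero_mul, NNReal.coe_one, one_mul, zero_add]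
  rw [integral_add (h_int _) (h_int _), add_sub_cancel_right]

lemma integral_hermite_sq (k : ℕ) :
    ∫ x, aeval x (hermite k) ^ 2 ∂gaussianReal 0 1 = (k.factorial : ℝ) := by
  induction k with
  | zero => simp
  | succ k ih =>
    have h := integral_aeval_mul_hermite_succ (hermite (k + 1)) k
    simp only [derivative_hermite_succ, map_mul, map_add, map_natCast, map_one, mul_assoc,
      integral_const_mul] at h
    simp only [sq] at ih ⊢
    rw [h, ih, Nat.factorial_succ]
    push_cast
    rfl

/-- The `k`-th Hermite polynomial normalized in `L²(γ₁)`, as a function on `ℝ`: the polynomial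
against which `hermiteCoeff` integrates. -/
def normHermite (k : ℕ) (x : ℝ) : ℝ :=
  aeval x (hermite k) / √k.factorial

lemma memLp_normHermite (k : ℕ) : MemLp (normHermite k) 2 (gaussianReal 0 1) := by
  simpa only [div_eq_mul_inv] using! (memLp_two_aeval_gaussianReal 0 1 (hermite k)).mul_const _

lemma continuous_normHermite (k : ℕ) : Continuous (normHermite k) :=
  (hermite k).continuous_aeval.div_const _

lemma integral_normHermite_gaussianReal {ρ : ℝ} {v : ℝ≥0} (h : ρ ^ 2 + v = 1) (x : ℝ) (k : ℕ) :
    ∫ y, normHermite k y ∂gaussianReal (ρ * x) v = ρ ^ k * normHermite k x := by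
  simp only [normHermite, integral_div, integral_hermite_gaussianReal h, mul_div_assoc]

lemma hermiteCoeff_normHermite (k : ℕ) : hermiteCoeff (normHermite k) k = 1 := by
  have h_sq (x : ℝ) : normHermite k x * (aeval x (hermite k) / √k.factorial) =
      aeval x (hermite k) ^ 2 / k.factorial := by
    rw [normHermite, div_mul_div_comm, ← sq, Real.mul_self_sqrt (by positivity)]
  simp only [hermiteCoeff, h_sq, integral_div, integral_hermite_sq]
  exact div_self (by positivity)

end Hermite

section GaussianPairs

variable {Ω : Type*} {mΩ : MeasurableSpace Ω} {P : Measure Ω} {X Y : Ω → ℝ}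

lemma exists_hasLaw_prodMk_sub_cov_mul (hXY : HasGaussianLaw (fun ω ↦ (X ω, Y ω)) P)
    (hX : HasLaw X (gaussianReal 0 1) P) (hY : HasLaw Y (gaussianReal 0 1) P) :
    ∃ v : ℝ≥0, cov[X, Y; P] ^ 2 + v = 1 ∧
      HasLaw (fun ω ↦ (X ω, Y ω - cov[X, Y; P] * X ω))
        ((gaussianReal 0 1).prod (gaussianReal 0 v)) P := by
  have := hX.isProbabilityMeasure
  set ρ := cov[X, Y; P] with hρ
  have hX2 : MemLp X 2 P := hXY.fst.memLp_two
  have hY2 : MemLp Y 2 P := hXY.snd.memLp_two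
  have h_varX : Var[X; P] = 1 := by simp [hX.variance_eq]
  have h_varY : Var[Y; P] = 1 := by simp [hY.variance_eq]
  let Z : Ω → ℝ := fun ω ↦ Y ω - ρ * X ω
  have hXZ : HasGaussianLaw (fun ω ↦ (X ω, Z ω)) P :=
    hXY.map_fun ((ContinuousLinearMap.fst ℝ ℝ ℝ).prod
      (ContinuousLinearMap.snd ℝ ℝ ℝ - ρ • ContinuousLinearMap.fst ℝ ℝ ℝ))
  have h_cov : cov[X, Z; P] = 0 := by
    rw [covariance_fun_sub_right hX2 hY2 (hX2.const_mul ρ), covariance_const_mul_right,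
      covariance_self hX2.aemeasurable, h_varX, ← hρ]
    ring
  have h_mean : P[Z] = 0 := by
    rw [integral_sub (hY2.integrable one_le_two) ((hX2.const_mul ρ).integrable one_le_two),
      integral_const_mul, hX.integral_eq, hY.integral_eq]
    simp
  have h_var : Var[Z; P] = 1 - ρ ^ 2 := by
    rw [variance_fun_sub hY2 (hX2.const_mul ρ), variance_const_mul, covariance_const_mul_right,
      covariance_comm, h_varX, h_varY, ← hρ]
    ring
  have hZ : HasLaw Z (gaussianReal 0 Var[Z; P].toNNReal) P :=
    ⟨hXZ.snd.aemeasurable, by rw [hXZ.snd.map_eq_gaussianReal, h_mean]⟩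
  refine ⟨Var[Z; P].toNNReal, ?_, (hXZ.indepFun_of_covariance_eq_zero h_cov).hasLaw_prod hX hZ⟩
  rw [Real.coe_toNNReal _ (variance_nonneg _ _), h_var]
  ring

lemma memLp_comp_of_hasLaw {S E : Type*} [MeasurableSpace S] [NormedAddCommGroup E]
    {X : Ω → S} {μ : Measure S} {p : ℝ≥0∞} {f : S → E} (hX : HasLaw X μ P) (hf : MemLp f p μ) :
    MemLp (fun ω ↦ f (X ω)) p P := by
  rw [← hX.map_eq] at hf
  exact hf.comp_of_map hX.aemeasurable

lemma integral_mul_normHermite_of_hasGaussianLaw (hXY : HasGaussianLaw (fun ω ↦ (X ω, Y ω)) P)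
    (hX : HasLaw X (gaussianReal 0 1) P) (hY : HasLaw Y (gaussianReal 0 1) P) {f : ℝ → ℝ}
    (hf : MemLp f 2 (gaussianReal 0 1)) (k : ℕ) :
    ∫ ω, f (X ω) * normHermite k (Y ω) ∂P = cov[X, Y; P] ^ k * hermiteCoeff f k := by
  obtain ⟨v, hv, h_law⟩ := exists_hasLaw_prodMk_sub_cov_mul hXY hX hY
  set ρ := cov[X, Y; P]
  let F : ℝ × ℝ → ℝ := fun q ↦ f q.1 * normHermite k (ρ * q.1 + q.2)
  have hF_meas : AEStronglyMeasurable F ((gaussianReal 0 1).prod (gaussianReal 0 v)) :=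
    hf.aestronglyMeasurable.comp_fst.mul
      ((continuous_normHermite k).comp (by fun_prop)).aestronglyMeasurable
  have hF_comp : (fun ω ↦ f (X ω) * normHermite k (Y ω)) =
      F ∘ fun ω ↦ (X ω, Y ω - ρ * X ω) := by
    ext ω
    simp [F]
  have hF_int : Integrable F ((gaussianReal 0 1).prod (gaussianReal 0 v)) := by
    rw [← h_law.map_eq, integrable_map_measure (h_law.map_eq ▸ hF_meas) h_law.aemeasurable,
      ← hF_comp]
    exact (memLp_comp_of_hasLaw hX hf).integrable_mul
      (memLp_comp_of_hasLaw hY (memLp_normHermite k))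
  have h_cond (x : ℝ) : ∫ z, F (x, z) ∂gaussianReal 0 v = ρ ^ k * (f x * normHermite k x) := by
    have h_map : (gaussianReal 0 v).map (fun z ↦ ρ * x + z) = gaussianReal (ρ * x) v := by
      simp [gaussianReal_map_const_add]
    simp only [F]
    rw [integral_const_mul, ← integral_map (f := normHermite k) (by fun_prop)
      (continuous_normHermite k).aestronglyMeasurable, h_map, integral_normHermite_gaussianReal hv]
    ring
  calc ∫ ω, f (X ω) * normHermite k (Y ω) ∂P
      = ∫ q, F q ∂(gaussianReal 0 1).prod (gaussianReal 0 v) := by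
        rw [hF_comp, h_law.integral_comp hF_meas]
    _ = ∫ x, ρ ^ k * (f x * normHermite k x) ∂gaussianReal 0 1 := by
        simp_rw [integral_prod F hF_int, h_cond]
    _ = ρ ^ k * hermiteCoeff f k := integral_const_mul _ _

end GaussianPairs

section Gershgorin

open scoped MatrixOrder

variable {ι : Type*} [Fintype ι] [DecidableEq ι] {A : Matrix ι ι ℝ}

lemma algebraMap_le_iff_forall_le_eigenvalues (hA : A.IsHermitian) {b : ℝ} :
    algebraMap ℝ (Matrix ι ι ℝ) b ≤ A ↔ ∀ i, b ≤ hA.eigenvalues i := by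
  rw [algebraMap_le_iff_le_spectrum hA, hA.spectrum_real_eq_range_eigenvalues, forall_mem_range]

lemma algebraMap_le_of_le_diag_of_abs_offDiag_le (hA : A.IsHermitian) {a d : ℝ}
    (h_diag : ∀ i, a ≤ A i i) (h_off : ∀ i j, i ≠ j → |A i j| ≤ d) :
    algebraMap ℝ (Matrix ι ι ℝ) (a - (Fintype.card ι - 1) * d) ≤ A := by
  rw [algebraMap_le_iff_le_spectrum hA]
  intro eig h_eig
  have h_eigenvalue : Module.End.HasEigenvalue (Matrix.toLin' A) eig := by
    rwa [Module.End.hasEigenvalue_iff_mem_spectrum, Matrix.spectrum_toLin']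
  obtain ⟨k, hk⟩ := eigenvalue_mem_ball h_eigenvalue
  have h_radius : ∑ j ∈ Finset.univ.erase k, ‖A k j‖ ≤ (Fintype.card ι - 1) * d := by
    have h_card : ((Finset.univ.erase k).card : ℝ) = Fintype.card ι - 1 := by
      rw [Finset.card_erase_of_mem (Finset.mem_univ k), Finset.card_univ,
        Nat.cast_pred (Fintype.card_pos_iff.2 ⟨k⟩)]
    rw [← h_card, ← nsmul_eq_mul]
    exact Finset.sum_le_card_nsmul _ _ _ fun j hj ↦ h_off k j (Finset.ne_of_mem_erase hj).symm
  rw [mem_closedBall_iff_norm, Real.norm_eq_abs] at hk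
  linarith [neg_le_of_abs_le (hk.trans h_radius), h_diag k]

end Gershgorin

section KernelMatrix

open scoped MatrixOrder

variable {Ω ι : Type*} {mΩ : MeasurableSpace Ω} {P : Measure Ω}

lemma inner_toLp_toLp {F G : Ω → ℝ} (hF : MemLp F 2 P) (hG : MemLp G 2 P) :
    ⟪hF.toLp F, hG.toLp G⟫ = ∫ ω, F ω * G ω ∂P := by
  rw [L2.inner_def]
  refine integral_congr_ae ?_
  filter_upwards [hF.coeFn_toLp, hG.coeFn_toLp] with ω hFω hGω
  rw [hFω, hGω, Real.inner_apply]

/-- The matrix of second moments `𝔼[f(X i) f(X j)]`; the matrix `K` of the theorem is the case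
`X i w = ⟪w, v i⟫`, `P = gaussE m`. -/
def kernelMatrix (f : ℝ → ℝ) (X : ι → Ω → ℝ) (P : Measure Ω) : Matrix ι ι ℝ :=
  Matrix.of fun i j ↦ ∫ ω, f (X i ω) * f (X j ω) ∂P

lemma isHermitian_kernelMatrix (f : ℝ → ℝ) (X : ι → Ω → ℝ) (P : Measure Ω) :
    (kernelMatrix f X P).IsHermitian := by
  ext i j
  simp [kernelMatrix, mul_comm]

variable {f : ℝ → ℝ} {X : ι → Ω → ℝ}

lemma kernelMatrix_normHermite_apply (hX : ∀ i, HasLaw (X i) (gaussianReal 0 1) P)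
    (hXX : ∀ i j, HasGaussianLaw (fun ω ↦ (X i ω, X j ω)) P) (k : ℕ) (i j : ι) :
    kernelMatrix (normHermite k) X P i j = cov[X i, X j; P] ^ k := by
  rw [kernelMatrix, Matrix.of_apply, integral_mul_normHermite_of_hasGaussianLaw (hXX i j) (hX i)
    (hX j) (memLp_normHermite k), hermiteCoeff_normHermite, mul_one]

lemma hermiteCoeff_sq_smul_kernelMatrix_normHermite_le [Finite ι]
    (hX : ∀ i, HasLaw (X i) (gaussianReal 0 1) P)
    (hXX : ∀ i j, HasGaussianLaw (fun ω ↦ (X i ω, X j ω)) P)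
    (hf : MemLp f 2 (gaussianReal 0 1)) (k : ℕ) :
    hermiteCoeff f k ^ 2 • kernelMatrix (normHermite k) X P ≤ kernelMatrix f X P := by
  set a := hermiteCoeff f k
  let F (i : ι) : Lp ℝ 2 P := (memLp_comp_of_hasLaw (hX i) hf).toLp
  let H (i : ι) : Lp ℝ 2 P := (memLp_comp_of_hasLaw (hX i) (memLp_normHermite k)).toLp
  have h_FF (i j : ι) : ⟪F i, F j⟫ = kernelMatrix f X P i j := inner_toLp_toLp _ _
  have h_HH (i j : ι) : ⟪H i, H j⟫ = kernelMatrix (normHermite k) X P i j := inner_toLp_toLp _ _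
  have h_FH (i j : ι) : ⟪F i, H j⟫ = a * ⟪H i, H j⟫ := by
    rw [h_HH, kernelMatrix_normHermite_apply hX hXX, inner_toLp_toLp,
      integral_mul_normHermite_of_hasGaussianLaw (hXX i j) (hX i) (hX j) hf, mul_comm]
  have h_gram : kernelMatrix f X P - a ^ 2 • kernelMatrix (normHermite k) X P =
      Matrix.gram ℝ fun i ↦ F i - a • H i := by
    ext i j
    rw [Matrix.sub_apply, Matrix.smul_apply, ← h_FF, ← h_HH, Matrix.gram_apply, inner_sub_left,
      inner_sub_right, inner_sub_right, real_inner_smul_left, real_inner_smul_left,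
      real_inner_smul_right, real_inner_smul_right, real_inner_comm (F j) (H i), h_FH, h_FH,
      real_inner_comm (H i) (H j), smul_eq_mul]
    ring
  rw [Matrix.le_iff, h_gram]
  exact Matrix.posSemidef_gram ℝ _

lemma algebraMap_le_kernelMatrix_normHermite [Fintype ι] [DecidableEq ι]
    (hX : ∀ i, HasLaw (X i) (gaussianReal 0 1) P)
    (hXX : ∀ i j, HasGaussianLaw (fun ω ↦ (X i ω, X j ω)) P) {c : ℝ}
    (hcorr : ∀ i j, i ≠ j → |cov[X i, X j; P]| ≤ c) (k : ℕ) :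
    algebraMap ℝ (Matrix ι ι ℝ) (1 - (Fintype.card ι - 1) * c ^ k) ≤
      kernelMatrix (normHermite k) X P := by
  refine algebraMap_le_of_le_diag_of_abs_offDiag_le (isHermitian_kernelMatrix _ X P) (fun i ↦ ?_)
    fun i j hij ↦ ?_
  · rw [kernelMatrix_normHermite_apply hX hXX, covariance_self (hX i).aemeasurable,
      (hX i).variance_eq]
    simp
  · rw [kernelMatrix_normHermite_apply hX hXX, abs_pow]
    gcongr
    exact hcorr i j hij

end KernelMatrix

lemma mul_pow_le_one_half_of_log_div_le {a c : ℝ} (ha : 0 < a) (hc0 : 0 ≤ c) (hc1 : c < 1) {r : ℕ}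
    (hr : log (2 * a) / (1 - c) ≤ r) : a * c ^ r ≤ 1 / 2 := by
  have h_log : log (2 * a) ≤ r * (1 - c) := (div_le_iff₀ (sub_pos.2 hc1)).1 hr
  calc a * c ^ r
      ≤ a * exp (-(1 - c)) ^ r := by
        gcongr
        linarith [add_one_le_exp (-(1 - c))]
    _ ≤ a * exp (-log (2 * a)) := by
        rw [← exp_nat_mul]
        gcongr
        linarith
    _ = 1 / 2 := by
        rw [exp_neg, exp_log (by positivity)]
        field_simp

section StdGaussian

variable {E : Type*} [NormedAddCommGroup E] [InnerProductSpace ℝ E] [FiniteDimensional ℝ E]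
  [MeasurableSpace E] [BorelSpace E]

lemma cov_inner_stdGaussian (a b : E) :
    cov[fun w ↦ ⟪w, a⟫, fun w ↦ ⟪w, b⟫; stdGaussian E] = ⟪a, b⟫ := by
  have h := covarianceBilin_apply_eq_cov (μ := stdGaussian E) IsGaussian.memLp_two_id a b
  simp only [covarianceBilin_stdGaussian] at h
  simp_rw [real_inner_comm _ a, real_inner_comm _ b] at h
  exact h.symm

lemma hasGaussianLaw_prodMk_inner_stdGaussian (a b : E) :
    HasGaussianLaw (fun w ↦ (⟪w, a⟫, ⟪w, b⟫)) (stdGaussian E) := by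
  simpa [real_inner_comm] using! (IsGaussian.hasGaussianLaw_id (μ := stdGaussian E)).map_fun
    ((innerSL ℝ a).prod (innerSL ℝ b))

lemma hasLaw_inner_stdGaussian {a : E} (ha : ‖a‖ = 1) :
    HasLaw (fun w ↦ ⟪w, a⟫) (gaussianReal 0 1) (stdGaussian E) := by
  refine ⟨by fun_prop, ?_⟩
  simp_rw [real_inner_comm a]
  have h_map := IsGaussian.map_eq_gaussianReal (μ := stdGaussian E) (innerSL ℝ a)
  rw [integral_strongDual_stdGaussian, variance_dual_stdGaussian, innerSL_apply_norm, ha] at h_map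
  simpa using h_map

end StdGaussian

lemma gaussE_eq_stdGaussian (m : ℕ) : gaussE m = stdGaussian (EuclideanSpace ℝ (Fin m)) := by
  rw [← map_pi_eq_stdGaussian]
  rfl

open scoped MatrixOrder in
theorem statement11_general {Ω ι : Type*} {mΩ : MeasurableSpace Ω} {P : Measure Ω} [Fintype ι]
    [DecidableEq ι] [Nonempty ι] {X : ι → Ω → ℝ} (hX : ∀ i, HasLaw (X i) (gaussianReal 0 1) P)
    (hXX : ∀ i j, HasGaussianLaw (fun ω ↦ (X i ω, X j ω)) P) {c : ℝ} (hc0 : 0 ≤ c) (hc1 : c < 1)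
    (hcorr : ∀ i j, i ≠ j → |cov[X i, X j; P]| ≤ c) {f : ℝ → ℝ}
    (hf : MemLp f 2 (gaussianReal 0 1)) (r : ℕ) :
    hermiteCoeff f r ^ 2 * (1 - (Fintype.card ι - 1) * c ^ r) ≤
        ⨅ i, (isHermitian_kernelMatrix f X P).eigenvalues i ∧
      (log (2 * Fintype.card ι) / (1 - c) ≤ r →
        hermiteCoeff f r ^ 2 / 2 ≤ hermiteCoeff f r ^ 2 * (1 - (Fintype.card ι - 1) * c ^ r)) := by
  set a := hermiteCoeff f r
  set b := 1 - (Fintype.card ι - 1) * c ^ r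
  constructor
  · have h_hermite : algebraMap ℝ _ b ≤ kernelMatrix (normHermite r) X P :=
      algebraMap_le_kernelMatrix_normHermite hX hXX hcorr r
    have h_kernel : algebraMap ℝ _ (a ^ 2 * b) ≤ kernelMatrix f X P :=
      calc algebraMap ℝ (Matrix ι ι ℝ) (a ^ 2 * b)
          = a ^ 2 • algebraMap ℝ _ b := by rw [map_mul, Algebra.smul_def]
        _ ≤ a ^ 2 • kernelMatrix (normHermite r) X P := by gcongr
        _ ≤ kernelMatrix f X P := hermiteCoeff_sq_smul_kernelMatrix_normHermite_le hX hXX hf r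
    exact le_ciInf ((algebraMap_le_iff_forall_le_eigenvalues _).1 h_kernel)
  · intro hr
    have h_half : 1 / 2 ≤ b := by
      linarith [mul_pow_le_one_half_of_log_div_le (a := Fintype.card ι) (by positivity) hc0 hc1 hr,
        pow_nonneg hc0 r]
    rw [div_eq_mul_one_div]
    gcongr

/-- lower bound on the smallest eigenvalue of the kernel matrix
`K_{ij} = ∫ f(⟪w,vᵢ⟫) f(⟪w,vⱼ⟫) dγ_m(w)` for unit vectors with pairwise correlations at
most `c < 1`, via the `r`-th Hermite coefficient of `f`. -/
theorem statement11 (n m : ℕ) (hn : 2 ≤ n) (hm : 1 ≤ m)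
    (v : Fin n → EuclideanSpace ℝ (Fin m))
    (hunit : ∀ i, ‖v i‖ = 1)
    (c : ℝ) (hc0 : 0 ≤ c) (hc1 : c < 1)
    (hcorr : ∀ i j, i ≠ j → |⟪v i, v j⟫| ≤ c)
    (f : ℝ → ℝ) (hf : Measurable f)
    (hL2 : Integrable (fun x => f x ^ 2) (gaussianReal 0 1)) :
    letI K : Matrix (Fin n) (Fin n) ℝ :=
      Matrix.of fun i j => ∫ w, f ⟪w, v i⟫ * f ⟪w, v j⟫ ∂(gaussE m)
    ∀ r : ℕ, 2 * Real.log (2 * n) / (1 - c) ≤ r →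
      ∀ hK : K.IsHermitian,
        hermiteCoeff f r ^ 2 * (1 - ((n : ℝ) - 1) * c ^ r) ≤ (⨅ i, hK.eigenvalues i) ∧
        hermiteCoeff f r ^ 2 / 2 ≤ hermiteCoeff f r ^ 2 * (1 - ((n : ℝ) - 1) * c ^ r) := by
  intro r hr hK
  have : Nonempty (Fin n) := ⟨⟨0, by lia⟩⟩
  have h_gauss := gaussE_eq_stdGaussian m
  have h_main := statement11_general (P := gaussE m) (X := fun i w ↦ ⟪w, v i⟫)
    (fun i ↦ h_gauss ▸ hasLaw_inner_stdGaussian (hunit i))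
    (fun i j ↦ h_gauss ▸ hasGaussianLaw_prodMk_inner_stdGaussian (v i) (v j)) hc0 hc1
    (fun i j hij ↦ by rw [h_gauss, cov_inner_stdGaussian]; exact hcorr i j hij)
    ((memLp_two_iff_integrable_sq hf.aestronglyMeasurable).2 hL2) r
  rw [Fintype.card_fin] at h_main
  refine ⟨h_main.1, h_main.2 (le_trans ?_ hr)⟩
  gcongr
  linarith [log_nonneg (show (1 : ℝ) ≤ 2 * n by norm_cast; lia)]

end
end
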